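/- Consider a finite two-player stochastic game. Suppose W₁ : X → ℝ is a fixed point of the zero-sum Bellman operator T₁ with coalition reward R₁ − R₂ (i.e., T₁ W₁ = W₁), and W₁₂ : X → ℝ is a fixed point of the cooperative Bellman operator T₁₂ (i.e., T₁₂ W₁₂ = W₁₂). Then the pair V = (V₁, V₂) defined by V₁ = ½(W₁₂ + W₁) and V₂ = ½(W₁₂ − W₁) is a fixed point of the HS Bellman operator: T V = V. In particular, in the two-player case the coalition-decomposition HS value function V_HS solves the generalized Bellman equations defining V_{HS*}, so V_HS = V_{HS*}. -/

import Mathlib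

open Finset

/-- The maxmin value of a two-player zero-sum game with payoff `W` to the maximizer:
`sup` over mixed strategies of the row player of the `inf` over mixed strategies of the
column player of the expected payoff. -/
noncomputable def maxmin {S T : Type*} [Fintype S] [Fintype T] (W : S → T → ℝ) : ℝ :=
  ⨆ σ : stdSimplex ℝ S, ⨅ τ : stdSimplex ℝ T,
    ∑ s : S, ∑ t : T, σ.1 s * τ.1 t * W s t

/-- The two-player Harsanyi–Shapley (Coco) value of player 1:
`HS₁(G) = ½(max_a(U₁(a)+U₂(a)) + maxmin₁(U₁−U₂))`, where player 1 maximizes. -/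
noncomputable def hs1 {A₁ A₂ : Type*} [Fintype A₁] [Fintype A₂]
    (U₁ U₂ : A₁ → A₂ → ℝ) : ℝ :=
  (1 / 2) * ((⨆ a : A₁ × A₂, (U₁ a.1 a.2 + U₂ a.1 a.2)) +
    maxmin (fun a₁ a₂ => U₁ a₁ a₂ - U₂ a₁ a₂))

/-- The two-player Harsanyi–Shapley (Coco) value of player 2:
`HS₂(G) = ½(max_a(U₁(a)+U₂(a)) + maxmin₂(U₂−U₁))`, where player 2 maximizes. -/
noncomputable def hs2 {A₁ A₂ : Type*} [Fintype A₁] [Fintype A₂]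
    (U₁ U₂ : A₁ → A₂ → ℝ) : ℝ :=
  (1 / 2) * ((⨆ a : A₁ × A₂, (U₁ a.1 a.2 + U₂ a.1 a.2)) +
    maxmin (fun a₂ a₁ => U₂ a₁ a₂ - U₁ a₁ a₂))

/-- The zero-sum Bellman operator with coalition reward `U` and maximizing player 1:
`[T₁ V](x)` is the maxmin (over `Δ(A₁) × Δ(A₂)`) of
`(a₁,a₂) ↦ Σ_y P(x,(a₁,a₂),y)(U(x,(a₁,a₂),y) + γ V(y))`. -/
noncomputable def bellmanZS1 {X A₁ A₂ : Type*} [Fintype X] [Fintype A₁] [Fintype A₂]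
    (P : X → A₁ × A₂ → X → ℝ) (γ : ℝ) (U : X → A₁ × A₂ → X → ℝ)
    (V : X → ℝ) : X → ℝ := fun x =>
  maxmin (fun a₁ a₂ => ∑ y : X, P x (a₁, a₂) y * (U x (a₁, a₂) y + γ * V y))

/-- The zero-sum Bellman operator with coalition reward `U` and maximizing player 2:
`[T₂ V](x)` is the maxmin over `Δ(A₂) × Δ(A₁)` (player 2 maximizing) of
`(a₂,a₁) ↦ Σ_y P(x,(a₁,a₂),y)(U(x,(a₁,a₂),y) + γ V(y))`. -/
noncomputable def bellmanZS2 {X A₁ A₂ : Type*} [Fintype X] [Fintype A₁] [Fintype A₂]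
    (P : X → A₁ × A₂ → X → ℝ) (γ : ℝ) (U : X → A₁ × A₂ → X → ℝ)
    (V : X → ℝ) : X → ℝ := fun x =>
  maxmin (fun a₂ a₁ => ∑ y : X, P x (a₁, a₂) y * (U x (a₁, a₂) y + γ * V y))

/-- The cooperative Bellman operator:
`[T₁₂ V](x) = max_{a∈A} Σ_y P(x,a,y)(R₁(x,a,y) + R₂(x,a,y) + γ V(y))`. -/
noncomputable def bellmanCoop {X A₁ A₂ : Type*} [Fintype X] [Fintype A₁] [Fintype A₂]
    (P : X → A₁ × A₂ → X → ℝ) (γ : ℝ) (R₁ R₂ : X → A₁ × A₂ → X → ℝ)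
    (V : X → ℝ) : X → ℝ := fun x =>
  ⨆ a : A₁ × A₂, ∑ y : X, P x a y * (R₁ x a y + R₂ x a y + γ * V y)

/-- The HS Bellman operator: `[T V](x) = HS(G_x(V))`, where `G_x(V)` is the two-player
normal-form game with utilities `U_i(x,a,V) = Σ_y P(x,a,y)(R_i(x,a,y) + γ V_i(y))`. -/
noncomputable def bellmanHS {X A₁ A₂ : Type*} [Fintype X] [Fintype A₁] [Fintype A₂]
    (P : X → A₁ × A₂ → X → ℝ) (γ : ℝ) (R₁ R₂ : X → A₁ × A₂ → X → ℝ)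
    (V : X → ℝ × ℝ) : X → ℝ × ℝ := fun x =>
  (hs1 (fun a₁ a₂ => ∑ y : X, P x (a₁, a₂) y * (R₁ x (a₁, a₂) y + γ * (V y).1))
       (fun a₁ a₂ => ∑ y : X, P x (a₁, a₂) y * (R₂ x (a₁, a₂) y + γ * (V y).2)),
   hs2 (fun a₁ a₂ => ∑ y : X, P x (a₁, a₂) y * (R₁ x (a₁, a₂) y + γ * (V y).1))
       (fun a₁ a₂ => ∑ y : X, P x (a₁, a₂) y * (R₂ x (a₁, a₂) y + γ * (V y).2)))

/-!
Coalition decomposition commutes with one step of the HS Bellman operator. In the game `G_x(V)` the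
sum of the two utilities depends on `V` only through `V₁ + V₂` and their difference only through
`V₁ - V₂`, so the cooperative and the zero-sum part of the HS value are the operators `T₁₂` and `T₁`
applied to these two combinations. The only nontrivial input is that player 2's zero-sum part is
the negative of player 1's: this is the minimax theorem, which yields a saddle point, and reversing
the roles of the players turns a saddle point of `W` into one of `-Wᵀ`.
-/

theorem ciSup_ciInf_eq_of_isSaddlePointOn {E F β : Type*} [ConditionallyCompleteLattice β]
    {X : Set E} {Y : Set F} {f : E → F → β} {a : E} {b : F} (ha : a ∈ X) (hb : b ∈ Y)
    (h : IsSaddlePointOn X Y f a b) (hf : ∀ y ∈ Y, BddBelow ((f · y) '' X)) :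
    ⨆ y : Y, ⨅ x : X, f x y = f a b := by
  have : Nonempty X := ⟨⟨a, ha⟩⟩
  have : Nonempty Y := ⟨⟨b, hb⟩⟩
  have iInf_le_value (y : Y) : ⨅ x : X, f x y ≤ f a b := by
    have hbdd : BddBelow (Set.range fun x : X => f x y) := by
      simpa only [Set.image_eq_range] using hf y y.2
    exact (ciInf_le hbdd ⟨a, ha⟩).trans (h a ha y y.2)
  have value_le_iInf : f a b ≤ ⨅ x : X, f x b := le_ciInf fun x => h x x.2 b hb
  exact le_antisymm (ciSup_le iInf_le_value)
    (le_ciSup_of_le ⟨f a b, Set.forall_mem_range.2 iInf_le_value⟩ ⟨b, hb⟩ value_le_iInf)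

theorem isSaddlePointOn_neg_swap {E F β : Type*} [AddCommGroup β] [PartialOrder β]
    [IsOrderedAddMonoid β] {X : Set E} {Y : Set F} {f : E → F → β} {a : E} {b : F}
    (h : IsSaddlePointOn X Y f a b) : IsSaddlePointOn Y X (fun y x => -f x y) b a :=
  fun y hy x hx => neg_le_neg (h x hx y hy)

theorem exists_isSaddlePointOn_bilin {E F : Type*}
    [TopologicalSpace E] [AddCommGroup E] [Module ℝ E] [IsTopologicalAddGroup E]
    [ContinuousSMul ℝ E]
    [TopologicalSpace F] [AddCommGroup F] [Module ℝ F] [IsTopologicalAddGroup F]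
    [ContinuousSMul ℝ F]
    {X : Set E} (hXne : X.Nonempty) (hXconv : Convex ℝ X) (hXcomp : IsCompact X)
    {Y : Set F} (hYne : Y.Nonempty) (hYconv : Convex ℝ Y) (hYcomp : IsCompact Y)
    (B : E →ₗ[ℝ] F →ₗ[ℝ] ℝ) (hBleft : ∀ y, Continuous (B.flip y))
    (hBright : ∀ x, Continuous (B x)) :
    ∃ a ∈ X, ∃ b ∈ Y, IsSaddlePointOn X Y (fun x y => B x y) a b :=
  Sion.exists_isSaddlePointOn hXne hXconv hXcomp
    (fun y _ => (hBleft y).lowerSemicontinuous.lowerSemicontinuousOn X)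
    (fun y _ => ((B.flip y).convexOn hXconv).quasiconvexOn)
    hYconv hYne hYcomp
    (fun x _ => (hBright x).upperSemicontinuous.upperSemicontinuousOn Y)
    (fun x _ => ((B x).concaveOn hYconv).quasiconcaveOn)

section ZeroSum

variable {S T : Type*} [Fintype S] [Fintype T]

open Classical in
/-- The expected payoff to the row player of the zero-sum game `W`, as a bilinear form in the mixed
strategies of the row and the column player. It is defined on all real weight vectors, so that the
minimax theorem for bilinear forms applies to it. -/
noncomputable def expectedPayoff (W : S → T → ℝ) : (S → ℝ) →ₗ[ℝ] (T → ℝ) →ₗ[ℝ] ℝ :=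
  Matrix.toLinearMap₂' ℝ (Matrix.of W)

theorem expectedPayoff_apply (W : S → T → ℝ) (σ : S → ℝ) (τ : T → ℝ) :
    expectedPayoff W σ τ = ∑ s, ∑ t, σ s * τ t * W s t := by
  simp only [expectedPayoff, Matrix.toLinearMap₂'_apply, Matrix.of_apply, smul_eq_mul, mul_assoc]

theorem expectedPayoff_neg_swap (W : S → T → ℝ) (σ : S → ℝ) (τ : T → ℝ) :
    expectedPayoff (fun t s => -W s t) τ σ = -expectedPayoff W σ τ := by
  simp only [expectedPayoff_apply, mul_neg, sum_neg_distrib]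
  rw [sum_comm]
  simp only [mul_comm (τ _)]

theorem maxmin_eq_iSup_iInf_expectedPayoff (W : S → T → ℝ) :
    maxmin W = ⨆ σ : stdSimplex ℝ S, ⨅ τ : stdSimplex ℝ T, expectedPayoff W σ.1 τ.1 := by
  simp only [maxmin, expectedPayoff_apply]

theorem exists_isSaddlePointOn_expectedPayoff [Nonempty S] [Nonempty T] (W : S → T → ℝ) :
    ∃ τ ∈ stdSimplex ℝ T, ∃ σ ∈ stdSimplex ℝ S,
      IsSaddlePointOn (stdSimplex ℝ T) (stdSimplex ℝ S) (fun τ σ => expectedPayoff W σ τ) τ σ :=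
  exists_isSaddlePointOn_bilin
    (Set.nonempty_coe_sort.1 inferInstance) (convex_stdSimplex ℝ T) (isCompact_stdSimplex ℝ T)
    (Set.nonempty_coe_sort.1 inferInstance) (convex_stdSimplex ℝ S) (isCompact_stdSimplex ℝ S)
    (expectedPayoff W).flip (fun _ => LinearMap.continuous_of_finiteDimensional _)
    (fun _ => LinearMap.continuous_of_finiteDimensional _)

theorem maxmin_eq_of_isSaddlePointOn {W : S → T → ℝ} {σ : S → ℝ} {τ : T → ℝ}
    (hσ : σ ∈ stdSimplex ℝ S) (hτ : τ ∈ stdSimplex ℝ T)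
    (h : IsSaddlePointOn (stdSimplex ℝ T) (stdSimplex ℝ S) (fun τ σ => expectedPayoff W σ τ) τ σ) :
    maxmin W = expectedPayoff W σ τ := by
  rw [maxmin_eq_iSup_iInf_expectedPayoff]
  refine ciSup_ciInf_eq_of_isSaddlePointOn hτ hσ h fun σ' _ => ?_
  exact (isCompact_stdSimplex ℝ T).bddBelow_image
    (expectedPayoff W σ').continuous_of_finiteDimensional.continuousOn

theorem maxmin_neg_swap [Nonempty S] [Nonempty T] (W : S → T → ℝ) :
    maxmin (fun t s => -W s t) = -maxmin W := by
  obtain ⟨τ, hτ, σ, hσ, h⟩ := exists_isSaddlePointOn_expectedPayoff W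
  have hswap : IsSaddlePointOn (stdSimplex ℝ S) (stdSimplex ℝ T)
      (fun σ τ => expectedPayoff (fun t s => -W s t) τ σ) σ τ := by
    simpa only [expectedPayoff_neg_swap] using isSaddlePointOn_neg_swap h
  rw [maxmin_eq_of_isSaddlePointOn hσ hτ h, maxmin_eq_of_isSaddlePointOn hτ hσ hswap,
    expectedPayoff_neg_swap]

end ZeroSum

section HarsanyiShapley

variable {X A₁ A₂ : Type*} [Fintype X] [Fintype A₁] [Fintype A₂]

theorem hs1_eq (U₁ U₂ : A₁ → A₂ → ℝ) :
    hs1 U₁ U₂ = ((⨆ a : A₁ × A₂, (U₁ a.1 a.2 + U₂ a.1 a.2)) +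
      maxmin (fun a₁ a₂ => U₁ a₁ a₂ - U₂ a₁ a₂)) / 2 := by
  rw [hs1, one_div_mul_eq_div]

theorem hs2_eq [Nonempty A₁] [Nonempty A₂] (U₁ U₂ : A₁ → A₂ → ℝ) :
    hs2 U₁ U₂ = ((⨆ a : A₁ × A₂, (U₁ a.1 a.2 + U₂ a.1 a.2)) -
      maxmin (fun a₁ a₂ => U₁ a₁ a₂ - U₂ a₁ a₂)) / 2 := by
  have hswap : maxmin (fun a₂ a₁ => U₂ a₁ a₂ - U₁ a₁ a₂) =
      -maxmin (fun a₁ a₂ => U₁ a₁ a₂ - U₂ a₁ a₂) := by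
    simpa only [neg_sub] using maxmin_neg_swap fun a₁ a₂ => U₁ a₁ a₂ - U₂ a₁ a₂
  rw [hs2, hswap, one_div_mul_eq_div, sub_eq_add_neg]

theorem bellmanHS_eq [Nonempty A₁] [Nonempty A₂] (P : X → A₁ × A₂ → X → ℝ) (γ : ℝ)
    (R₁ R₂ : X → A₁ × A₂ → X → ℝ) (V : X → ℝ × ℝ) :
    bellmanHS P γ R₁ R₂ V = fun x =>
      let C := bellmanCoop P γ R₁ R₂ (fun y => (V y).1 + (V y).2) x
      let Z := bellmanZS1 P γ (fun x a y => R₁ x a y - R₂ x a y) (fun y => (V y).1 - (V y).2) x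
      ((C + Z) / 2, (C - Z) / 2) := by
  have utility_add (x a) :
      ∑ y, P x a y * (R₁ x a y + γ * (V y).1) + ∑ y, P x a y * (R₂ x a y + γ * (V y).2) =
        ∑ y, P x a y * (R₁ x a y + R₂ x a y + γ * ((V y).1 + (V y).2)) := by
    rw [← sum_add_distrib]
    exact sum_congr rfl fun y _ => by ring
  have utility_sub (x a) :
      ∑ y, P x a y * (R₁ x a y + γ * (V y).1) - ∑ y, P x a y * (R₂ x a y + γ * (V y).2) =
        ∑ y, P x a y * (R₁ x a y - R₂ x a y + γ * ((V y).1 - (V y).2)) := by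
    rw [← sum_sub_distrib]
    exact sum_congr rfl fun y _ => by ring
  funext x
  simp only [bellmanHS, hs1_eq, hs2_eq, utility_add, utility_sub, bellmanCoop, bellmanZS1]

theorem hs_bellman_fixed_point_general [Nonempty A₁] [Nonempty A₂] (P : X → A₁ × A₂ → X → ℝ)
    (γ : ℝ) (R₁ R₂ : X → A₁ × A₂ → X → ℝ) (W₁ W₁₂ : X → ℝ) :
    bellmanHS P γ R₁ R₂ (fun x => ((W₁₂ x + W₁ x) / 2, (W₁₂ x - W₁ x) / 2)) =
        (fun x => ((W₁₂ x + W₁ x) / 2, (W₁₂ x - W₁ x) / 2)) ↔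
      bellmanZS1 P γ (fun x a y => R₁ x a y - R₂ x a y) W₁ = W₁ ∧
        bellmanCoop P γ R₁ R₂ W₁₂ = W₁₂ := by
  have half_add_half (a b : ℝ) : (a + b) / 2 + (a - b) / 2 = a := by ring
  have half_sub_half (a b : ℝ) : (a + b) / 2 - (a - b) / 2 = b := by ring
  have halves_inj (a b c d : ℝ) :
      ((a + b) / 2, (a - b) / 2) = ((c + d) / 2, (c - d) / 2) ↔ b = d ∧ a = c := by
    rw [Prod.mk.injEq]
    constructor <;> rintro ⟨h, h'⟩ <;> constructor <;> linarith
  simp only [bellmanHS_eq, half_add_half, half_sub_half, funext_iff, halves_inj, forall_and]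

end HarsanyiShapley

/-- If `W₁` is a fixed point of the zero-sum Bellman operator `T₁` with coalition reward
`R₁ − R₂`, and `W₁₂` is a fixed point of the cooperative Bellman operator `T₁₂`, then
`V = (½(W₁₂ + W₁), ½(W₁₂ − W₁))` is a fixed point of the HS Bellman operator; hence in
the two-player case `V_HS` solves the generalized Bellman equations defining `V_{HS*}`. -/
theorem hs_bellman_fixed_point {X A₁ A₂ : Type*} [Fintype X] [Fintype A₁] [Fintype A₂]
    [Nonempty X] [Nonempty A₁] [Nonempty A₂]
    (P : X → A₁ × A₂ → X → ℝ)
    (hP_nonneg : ∀ x a y, 0 ≤ P x a y) (hP_sum : ∀ x a, ∑ y : X, P x a y = 1)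
    (γ : ℝ) (hγ0 : 0 ≤ γ) (hγ1 : γ < 1)
    (R₁ R₂ : X → A₁ × A₂ → X → ℝ) (W₁ W₁₂ : X → ℝ)
    (hW₁ : bellmanZS1 P γ (fun x a y => R₁ x a y - R₂ x a y) W₁ = W₁)
    (hW₁₂ : bellmanCoop P γ R₁ R₂ W₁₂ = W₁₂) :
    bellmanHS P γ R₁ R₂ (fun x => ((W₁₂ x + W₁ x) / 2, (W₁₂ x - W₁ x) / 2)) =
      fun x => ((W₁₂ x + W₁ x) / 2, (W₁₂ x - W₁ x) / 2) :=
  (hs_bellman_fixed_point_general P γ R₁ R₂ W₁ W₁₂).2 ⟨hW₁, hW₁₂⟩
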